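/- arXiv:1909.10103 — 2 statements merged into one kernel-verified Lean document; each statement's English description precedes it below -/
import Mathlib

section
/- There exist universal constants C > 0 and c > 0 with the following property. For every τ ∈ (0,1) and every horizontally valid two-dimensional move g with g + gᵀ = t_τ, the 1-norm of g satisfies ‖g‖₁ ≥ C·exp(c·τ^{−1/2}). -/
/-!
The two facts behind the bound are a rigidity statement for the moves `g` at `τ = 0` and a
two-constants estimate for analytic functions.

For `α > 0` put `p_y(α) = ∑ₓ x/(x+α) g(x,y)`, which is nonnegative by validity of the rows. Pairing
`g` with a symmetrised product `u(x)v(y) + v(x)u(y)` gives a value depending only on `t_τ`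
(`sum_symm`). Together with validity this gives, for the moments of the weights `p_y(α)`:
against `y`, at most `2/(1+α)`; the total mass over `y ≠ 0`, at most
`2/(1+α) - (2-τ)/(2-τ+α)`; against `y/(y+α)`, exactly `1/(1+α)²`. For `τ = 0` these numbers are the
equality case of Jensen's inequality, and in general they yield
`∑_{y ≠ 0} p_y(α) (y-2-α)²/(y+α) ≤ 2τ` (`moment_bound`): the weights concentrate at `y = 2 + α` with
variance `O(τ)`.

Fix `w = 3 + iη` with `η` a large multiple of `√τ`. The rational function
`H(α) = ∑ g(x,y) x/(x+α) y/(y+α) ((y-2-α)/(y-w))²` is holomorphic for `Re α > 0`. It is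
`O(τ/η²)`, hence small, for real `α > 0` (`Hfun_real_le`), it is `O(‖g‖₁/η²)` near `α = 1`
(`Hfun_norm_le`), and at `α = w - 2 = 1 + iη` the last factor is `1`, so that by symmetry
`H(1+iη) = 1/(2+iη)²` (`Hfun_diag`), which is not small. Seen from a point at height `η` the real
axis carries all but `O(η)` of the harmonic measure of a half disc, so this is only possible if
`log ‖g‖₁` is at least of order `1/η`, that is, of order `τ^{-1/2}`
(`two_constants`, `norm_lower`).
-/

open scoped BigOperators Classical

noncomputable section

/-- The profile `P_x` of a point `x ∈ ℝ≥0`, viewed as a function on `[1,∞]`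
(the extended reals `EReal` model the interval with its point `∞ = ⊤`):
`P_x(α) = 1` for `α ∈ [1,2)`, `P_x(α) = (xα - x)/(x + α - 2)` for `α ∈ [2,∞)`,
and `P_x(∞) = x` (with the conventions `P_0(α) = 0` for `α ∈ [2,∞]`, which the
formula also yields since division by zero is zero). -/
def Pfun (x : ℝ) (α : EReal) : ℝ :=
  if α = ⊤ then x
  else if α.toReal < 2 then 1
  else (x * α.toReal - x) / (x + α.toReal - 2)

/-- A one-dimensional move: a finitely supported function on `ℝ≥0`
(modeled as a function on `ℝ` vanishing on the negatives). -/
def IsMove1 (f : ℝ → ℝ) : Prop :=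
  (Function.support f).Finite ∧ ∀ x : ℝ, x < 0 → f x = 0

/-- Validity of a one-dimensional move. -/
def IsValid1 (f : ℝ → ℝ) : Prop :=
  (∑ᶠ x, f x) = 0 ∧
  (∀ lam : ℝ, 0 < lam → 0 ≤ ∑ᶠ x, (x / (x + lam)) * f x) ∧
  0 ≤ ∑ᶠ x, x * f x

/-- The profile of a one-dimensional move. -/
def prof1 (f : ℝ → ℝ) (α : EReal) : ℝ := ∑ᶠ x, f x * Pfun x α

/-- A two-dimensional move: a finitely supported function on `ℝ≥0 × ℝ≥0`. -/
def IsMove2 (q : ℝ × ℝ → ℝ) : Prop :=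
  (Function.support q).Finite ∧ ∀ p : ℝ × ℝ, p.1 < 0 ∨ p.2 < 0 → q p = 0

/-- A two-dimensional move is horizontally valid if all of its rows are valid. -/
def HorizValid (q : ℝ × ℝ → ℝ) : Prop := ∀ y : ℝ, IsValid1 fun x => q (x, y)

/-- A two-dimensional move is vertically valid if all of its columns are valid. -/
def VertValid (q : ℝ × ℝ → ℝ) : Prop := ∀ x : ℝ, IsValid1 fun y => q (x, y)

/-- The two-variable profile of a two-dimensional move. -/
def prof2 (q : ℝ × ℝ → ℝ) (α β : EReal) : ℝ :=
  ∑ᶠ p : ℝ × ℝ, q p * Pfun p.1 α * Pfun p.2 β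

/-- The transpose move `qᵀ(x,y) = q(y,x)`. -/
def transpose (q : ℝ × ℝ → ℝ) : ℝ × ℝ → ℝ := fun p => q (p.2, p.1)

/-- `pt x y` is the indicator move `⟦x,y⟧`. -/
def pt (x y : ℝ) : ℝ × ℝ → ℝ := fun p => if p = (x, y) then 1 else 0

/-- The move `t_τ = 2·⟦1,1⟧ - ⟦2-τ,0⟧ - ⟦0,2-τ⟧`. -/
def tMove (τ : ℝ) : ℝ × ℝ → ℝ :=
  fun p => 2 * pt 1 1 p - pt (2 - τ) 0 p - pt 0 (2 - τ) p

/-- `slice g b` is the move `g_b`: the part of `g` on the horizontal line `y = b`. -/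
def hslice (g : ℝ × ℝ → ℝ) (b : ℝ) : ℝ × ℝ → ℝ := fun p => if p.2 = b then g p else 0

/-! ### The moment inequality -/

/-- Symmetrising a product test function: pairing `g` with `u(x)v(y) + v(x)u(y)` only depends on
`g + gᵀ = t_τ`. The ring homomorphism allows real and complex test functions at once. -/
lemma sum_symm {K : Type*} [CommRing K] (φ : ℝ →+* K) {τ : ℝ} {g : ℝ × ℝ → ℝ} {S : Finset ℝ}
    (h0 : (0 : ℝ) ∈ S) (h1 : (1 : ℝ) ∈ S) (h2 : 2 - τ ∈ S)
    (hsym : ∀ p, g p + transpose g p = tMove τ p) (u v : ℝ → K) :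
    ∑ x ∈ S, ∑ y ∈ S, φ (g (x, y)) * (u x * v y)
      + ∑ x ∈ S, ∑ y ∈ S, φ (g (x, y)) * (v x * u y)
      = 2 * (u 1 * v 1) - u (2 - τ) * v 0 - u 0 * v (2 - τ) := by
  rw [Finset.sum_comm (f := fun x y => φ (g (x, y)) * (v x * u y)), ← Finset.sum_add_distrib]
  have hpt : ∀ a ∈ S, ∀ b ∈ S,
      ∑ x ∈ S, ∑ y ∈ S, φ (pt a b (x, y)) * (u x * v y) = u a * v b := by
    intro a ha b hb
    rw [Finset.sum_eq_single_of_mem a ha, Finset.sum_eq_single_of_mem b hb]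
    · simp [pt]
    · intro y _ hy
      simp [pt, hy]
    · intro x _ hx
      simp [pt, hx]
  rw [← hpt 1 h1 1 h1, ← hpt _ h2 0 h0, ← hpt 0 h0 _ h2, Finset.mul_sum,
    ← Finset.sum_sub_distrib, ← Finset.sum_sub_distrib]
  refine Finset.sum_congr rfl fun x _ => ?_
  rw [← Finset.sum_add_distrib, Finset.mul_sum, ← Finset.sum_sub_distrib,
    ← Finset.sum_sub_distrib]
  refine Finset.sum_congr rfl fun y _ => ?_
  have := congrArg φ (hsym (x, y))
  simp only [transpose, tMove, map_add, map_sub, map_mul, map_ofNat] at this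
  linear_combination (u x * v y) * this

/-- Let `p_y = ∑ₓ x/(x+α) g(x,y) ≥ 0` be the row weights. Three of their moments are controlled
by `t_τ`. The test function below is the linear combination of the three that vanishes to second
order at `y = 2 + α` and is positive at every other `y > 0`; the bounds cancel up to `O(τ)`, so the
weights concentrate around `y = 2 + α` with variance `O(τ)`. -/
lemma moment_bound {τ : ℝ} (hτ0 : 0 < τ) (hτ1 : τ < 1) {g : ℝ × ℝ → ℝ} {S : Finset ℝ}
    (hS : ∀ x ∈ S, 0 ≤ x)
    (h0 : (0 : ℝ) ∈ S) (h1 : (1 : ℝ) ∈ S) (h2 : 2 - τ ∈ S)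
    (hsym : ∀ p, g p + transpose g p = tMove τ p)
    (hr0 : ∀ y, ∑ x ∈ S, g (x, y) = 0)
    (hr1 : ∀ y lam, 0 < lam → 0 ≤ ∑ x ∈ S, (x / (x + lam)) * g (x, y))
    (hr2 : ∀ y, 0 ≤ ∑ x ∈ S, x * g (x, y)) {α : ℝ} (hα : 0 < α) :
    ∑ y ∈ S, (∑ x ∈ S, (x / (x + α)) * g (x, y)) *
      (if y = 0 then 0 else (y - 2 - α) ^ 2 / (y + α)) ≤ 2 * τ := by
  -- the moment against `y`
  have e1 : ∑ y ∈ S, (∑ x ∈ S, (x / (x + α)) * g (x, y)) * y ≤ 2 / (1 + α) := by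
    have h := sum_symm (RingHom.id ℝ) h0 h1 h2 hsym (fun x => x / (x + α)) (fun y => y)
    simp only [RingHom.id_apply, zero_div, mul_zero, zero_mul, sub_zero, mul_one] at h
    have hn : 0 ≤ ∑ x ∈ S, ∑ y ∈ S, g (x, y) * (x * (y / (y + α))) := by
      rw [Finset.sum_comm]
      refine Finset.sum_nonneg fun y hy => ?_
      have : ∑ x ∈ S, g (x, y) * (x * (y / (y + α)))
          = (∑ x ∈ S, x * g (x, y)) * (y / (y + α)) := by
        rw [Finset.sum_mul]; exact Finset.sum_congr rfl fun x _ => by ring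
      rw [this]
      have := hS y hy
      exact mul_nonneg (hr2 y) (by positivity)
    have hc : ∑ y ∈ S, (∑ x ∈ S, (x / (x + α)) * g (x, y)) * y
        = ∑ x ∈ S, ∑ y ∈ S, g (x, y) * (x / (x + α) * y) := by
      rw [Finset.sum_comm]
      refine Finset.sum_congr rfl fun y _ => ?_
      rw [Finset.sum_mul]; exact Finset.sum_congr rfl fun x _ => by ring
    rw [hc]
    have : 2 / (1 + α) = 2 * (1 / (1 + α)) := by ring
    linarith
  -- the total mass of the rows `y ≠ 0`
  have e2 : ∑ y ∈ S, (∑ x ∈ S, (x / (x + α)) * g (x, y)) * (if y = 0 then 0 else 1)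
      ≤ 2 / (1 + α) - (2 - τ) / (2 - τ + α) := by
    have h := sum_symm (RingHom.id ℝ) h0 h1 h2 hsym (fun x => x / (x + α))
      (fun y => if y = 0 then 0 else 1)
    have h' := sum_symm (RingHom.id ℝ) h0 h1 h2 hsym (fun x => x / (x + α))
      (fun y => if y = 0 then 1 else 0)
    have hne : (2 - τ) ≠ 0 := by linarith
    simp only [RingHom.id_apply, zero_div, mul_zero, sub_zero, mul_one,
      one_ne_zero, if_false, if_true, hne] at h h'
    have hA : ∑ x ∈ S, ∑ y ∈ S, g (x, y) * ((if x = 0 then 0 else 1) * (y / (y + α)))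
        + ∑ x ∈ S, ∑ y ∈ S, g (x, y) * ((if x = 0 then 1 else 0) * (y / (y + α))) = 0 := by
      rw [← Finset.sum_add_distrib]
      simp_rw [← Finset.sum_add_distrib]
      rw [Finset.sum_comm]
      refine Finset.sum_eq_zero fun y _ => ?_
      have : ∑ x ∈ S, (g (x, y) * ((if x = 0 then 0 else 1) * (y / (y + α)))
          + g (x, y) * ((if x = 0 then 1 else 0) * (y / (y + α))))
          = (∑ x ∈ S, g (x, y)) * (y / (y + α)) := by
        rw [Finset.sum_mul]
        refine Finset.sum_congr rfl fun x _ => ?_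
        split_ifs <;> ring
      rw [this, hr0, zero_mul]
    have hB : 0 ≤ ∑ x ∈ S, ∑ y ∈ S, g (x, y) * (x / (x + α) * (if y = 0 then 1 else 0)) := by
      rw [Finset.sum_comm]
      refine Finset.sum_nonneg fun y hy => ?_
      have : ∑ x ∈ S, g (x, y) * (x / (x + α) * (if y = 0 then 1 else 0))
          = (∑ x ∈ S, x / (x + α) * g (x, y)) * (if y = 0 then 1 else 0) := by
        rw [Finset.sum_mul]; exact Finset.sum_congr rfl fun x _ => by ring
      rw [this]
      exact mul_nonneg (hr1 y α hα) (by split_ifs <;> norm_num)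
    have hc : ∑ y ∈ S, (∑ x ∈ S, (x / (x + α)) * g (x, y)) * (if y = 0 then 0 else 1)
        = ∑ x ∈ S, ∑ y ∈ S, g (x, y) * (x / (x + α) * (if y = 0 then 0 else 1)) := by
      rw [Finset.sum_comm]
      refine Finset.sum_congr rfl fun y _ => ?_
      rw [Finset.sum_mul]; exact Finset.sum_congr rfl fun x _ => by ring
    rw [hc]
    have : 2 / (1 + α) = 2 * (1 / (1 + α)) := by ring
    linarith
  -- the moment against `y/(y+α)`
  have e3 : ∑ y ∈ S, (∑ x ∈ S, (x / (x + α)) * g (x, y)) * (y / (y + α))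
      = 1 / (1 + α) ^ 2 := by
    have h := sum_symm (RingHom.id ℝ) h0 h1 h2 hsym (fun x => x / (x + α))
      (fun y => y / (y + α))
    simp only [RingHom.id_apply, zero_div, mul_zero, zero_mul, sub_zero] at h
    have hc : ∑ y ∈ S, (∑ x ∈ S, (x / (x + α)) * g (x, y)) * (y / (y + α))
        = ∑ x ∈ S, ∑ y ∈ S, g (x, y) * (x / (x + α) * (y / (y + α))) := by
      rw [Finset.sum_comm]
      refine Finset.sum_congr rfl fun y _ => ?_
      rw [Finset.sum_mul]; exact Finset.sum_congr rfl fun x _ => by ring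
    rw [hc]
    have : 1 / (1 + α) ^ 2 = 1 / (1 + α) * (1 / (1 + α)) := by
      rw [pow_two, one_div_mul_one_div]
    linarith
  have hsplit : ∑ y ∈ S, (∑ x ∈ S, (x / (x + α)) * g (x, y)) *
      (if y = 0 then 0 else (y - 2 - α) ^ 2 / (y + α))
      = ∑ y ∈ S, (∑ x ∈ S, (x / (x + α)) * g (x, y)) * y
        + (α + 2) ^ 2 / α *
          ∑ y ∈ S, (∑ x ∈ S, (x / (x + α)) * g (x, y)) * (if y = 0 then 0 else 1)
        - 4 * (1 + α) ^ 2 / α *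
          ∑ y ∈ S, (∑ x ∈ S, (x / (x + α)) * g (x, y)) * (y / (y + α)) := by
    rw [Finset.mul_sum, Finset.mul_sum, ← Finset.sum_add_distrib, ← Finset.sum_sub_distrib]
    refine Finset.sum_congr rfl fun y hy => ?_
    have := hS y hy
    have hya : y + α ≠ 0 := by positivity
    split_ifs with hy0
    · simp [hy0]
    · field_simp
      ring
  rw [hsplit, e3]
  have hpos : 0 ≤ (α + 2) ^ 2 / α := by positivity
  have hm := mul_le_mul_of_nonneg_left e2 hpos
  have hd : 0 < 2 - τ + α := by linarith
  have hval : 2 / (1 + α) + (α + 2) ^ 2 / α * (2 / (1 + α) - (2 - τ) / (2 - τ + α))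
      - 4 * (1 + α) ^ 2 / α * (1 / (1 + α) ^ 2) = (α + 2) * τ / (2 - τ + α) := by
    field_simp
    ring
  have hfin : (α + 2) * τ / (2 - τ + α) ≤ 2 * τ := by
    rw [div_le_iff₀ hd]
    nlinarith [mul_pos hτ0 hα, mul_pos hτ0 (sub_pos.2 hτ1)]
  linarith

/-! ### The analytic test function -/

/-- The rational function `∑ g(x,y) · x/(x+α) · y/(y+α) · ((y-2-α)/(y-w))²` of `α`. The last factor
is `1` when `w = 2 + α`, while for `α` real and `w` at distance `η` from the real axis it is
at most of order `(y-2-α)²/η²`. -/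
def Hfun (g : ℝ × ℝ → ℝ) (S : Finset ℝ) (w α : ℂ) : ℂ :=
  ∑ x ∈ S, ∑ y ∈ S, (g (x, y) : ℂ) * ((x / (x + α)) * (y / (y + α)))
    * ((y - 2 - α) / (y - w)) ^ 2

lemma add_ne_zero_of_re {x : ℝ} (hx : 0 ≤ x) {α : ℂ} (hα : 0 < α.re) : (x : ℂ) + α ≠ 0 := by
  intro h
  have := congrArg Complex.re h
  simp at this
  linarith

lemma norm_frac_le {x : ℝ} (hx : 0 ≤ x) {α : ℂ} (hα : 0 < α.re) :
    ‖(x : ℂ) / (x + α)‖ ≤ 1 := by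
  rw [norm_div, div_le_one (norm_pos_iff.2 (add_ne_zero_of_re hx hα)), Complex.norm_real,
    Real.norm_of_nonneg hx]
  have := Complex.re_le_norm ((x : ℂ) + α)
  simp at this
  linarith

lemma Hfun_diff (g : ℝ × ℝ → ℝ) {S : Finset ℝ} (hS : ∀ x ∈ S, 0 ≤ x) (w : ℂ) {α : ℂ}
    (hα : 0 < α.re) : DifferentiableAt ℂ (Hfun g S w) α := by
  unfold Hfun
  refine DifferentiableAt.fun_sum fun x hx => DifferentiableAt.fun_sum fun y hy => ?_
  have hx' := add_ne_zero_of_re (hS x hx) hα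
  have hy' := add_ne_zero_of_re (hS y hy) hα
  have a1 : DifferentiableAt ℂ (fun α : ℂ => (x : ℂ) / (x + α)) α :=
    (differentiableAt_const _).div ((differentiableAt_const _).add differentiableAt_id) hx'
  have a2 : DifferentiableAt ℂ (fun α : ℂ => (y : ℂ) / (y + α)) α :=
    (differentiableAt_const _).div ((differentiableAt_const _).add differentiableAt_id) hy'
  have a3 : DifferentiableAt ℂ (fun α : ℂ => ((y - 2 - α) / (y - w)) ^ 2) α :=
    (((differentiableAt_const _).sub differentiableAt_id).div_const _).pow 2
  exact ((differentiableAt_const _).mul (a1.mul a2)).mul a3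

lemma Hfun_diag {τ : ℝ} {g : ℝ × ℝ → ℝ} {S : Finset ℝ}
    (h0 : (0 : ℝ) ∈ S) (h1 : (1 : ℝ) ∈ S) (h2 : 2 - τ ∈ S)
    (hsym : ∀ p, g p + transpose g p = tMove τ p) {α : ℂ} (hα : α.im ≠ 0) :
    Hfun g S (2 + α) α = 1 / (1 + α) ^ 2 := by
  have h := sum_symm Complex.ofRealHom h0 h1 h2 hsym (fun x => (x : ℂ) / (x + α))
    (fun x => (x : ℂ) / (x + α))
  simp only [Complex.ofRealHom_eq_coe, Complex.ofReal_zero, Complex.ofReal_one, zero_div,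
    mul_zero, zero_mul, sub_zero] at h
  have e : Hfun g S (2 + α) α = ∑ x ∈ S, ∑ y ∈ S,
      (g (x, y) : ℂ) * ((x / (x + α)) * (y / (y + α))) := by
    unfold Hfun
    refine Finset.sum_congr rfl fun x _ => Finset.sum_congr rfl fun y _ => ?_
    have : (y : ℂ) - (2 + α) ≠ 0 := by
      intro h
      have := congrArg Complex.im h
      simp at this
      exact hα this
    rw [sub_sub, div_self this, one_pow, mul_one]
  rw [e, pow_two, ← one_div_mul_one_div]
  linear_combination h / 2

/-- The crude bound of the test function by the `1`-norm of `g`. -/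
lemma Hfun_norm_le (g : ℝ × ℝ → ℝ) {S : Finset ℝ} (hS : ∀ x ∈ S, 0 ≤ x) {w α : ℂ}
    {η : ℝ} (hη : 0 < η) (hη1 : η ≤ 1) (hw : w.im = η) (hwα : ‖w - 2 - α‖ ≤ 1)
    (hα : 0 < α.re) :
    ‖Hfun g S w α‖ ≤ (∑ x ∈ S, ∑ y ∈ S, |g (x, y)|) * (4 / η ^ 2) := by
  unfold Hfun
  rw [Finset.sum_mul]
  refine (norm_sum_le _ _).trans (Finset.sum_le_sum fun x hx => ?_)
  rw [Finset.sum_mul]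
  refine (norm_sum_le _ _).trans (Finset.sum_le_sum fun y hy => ?_)
  have hyw : η ≤ ‖(y : ℂ) - w‖ := by
    have := Complex.abs_im_le_norm ((y : ℂ) - w)
    simp only [Complex.sub_im, Complex.ofReal_im, zero_sub, abs_neg, hw, abs_of_pos hη] at this
    exact this
  have hpos : 0 < ‖(y : ℂ) - w‖ := hη.trans_le hyw
  have hq : ‖((y : ℂ) - 2 - α) / (y - w)‖ ≤ 2 / η := by
    rw [norm_div, div_le_div_iff₀ hpos hη]
    have htri : ‖(y : ℂ) - 2 - α‖ ≤ ‖(y : ℂ) - w‖ + ‖w - 2 - α‖ := by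
      have : (y : ℂ) - 2 - α = (y - w) + (w - 2 - α) := by ring
      rw [this]; exact norm_add_le _ _
    nlinarith
  rw [norm_mul, norm_mul, norm_mul, norm_pow, Complex.norm_real, Real.norm_eq_abs]
  have hf : ‖(x : ℂ) / (x + α)‖ * ‖(y : ℂ) / (y + α)‖ ≤ 1 :=
    mul_le_one₀ (norm_frac_le (hS x hx) hα) (norm_nonneg _) (norm_frac_le (hS y hy) hα)
  have hq2 : ‖((y : ℂ) - 2 - α) / (y - w)‖ ^ 2 ≤ 4 / η ^ 2 := by
    calc _ ≤ (2 / η) ^ 2 := pow_le_pow_left₀ (norm_nonneg _) hq 2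
      _ = 4 / η ^ 2 := by rw [div_pow]; norm_num
  refine mul_le_mul ?_ hq2 (by positivity) (abs_nonneg _)
  exact mul_le_of_le_one_right (abs_nonneg _) hf

/-- On the positive real axis the variance estimate makes the test function small. -/
lemma Hfun_real_le {τ : ℝ} (hτ0 : 0 < τ) (hτ1 : τ < 1) {g : ℝ × ℝ → ℝ} {S : Finset ℝ}
    (hS : ∀ x ∈ S, 0 ≤ x)
    (h0 : (0 : ℝ) ∈ S) (h1 : (1 : ℝ) ∈ S) (h2 : 2 - τ ∈ S)
    (hsym : ∀ p, g p + transpose g p = tMove τ p)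
    (hr0 : ∀ y, ∑ x ∈ S, g (x, y) = 0)
    (hr1 : ∀ y lam, 0 < lam → 0 ≤ ∑ x ∈ S, (x / (x + lam)) * g (x, y))
    (hr2 : ∀ y, 0 ≤ ∑ x ∈ S, x * g (x, y)) {α : ℝ} (hα : 0 < α)
    {η : ℝ} (hη : 0 < η) (hη1 : η ≤ 1) :
    ‖Hfun g S (3 + η * Complex.I) α‖ ≤ 8 * τ / η ^ 2 := by
  have hV := moment_bound hτ0 hτ1 hS h0 h1 h2 hsym hr0 hr1 hr2 hα
  have e : Hfun g S (3 + η * Complex.I) α = ∑ y ∈ S,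
      ((∑ x ∈ S, (x / (x + α)) * g (x, y) : ℝ) : ℂ) * (((y / (y + α) : ℝ) : ℂ)
        * (((y - 2 - α : ℝ) : ℂ) / (y - (3 + η * Complex.I))) ^ 2) := by
    unfold Hfun
    rw [Finset.sum_comm]
    refine Finset.sum_congr rfl fun y _ => ?_
    push_cast
    rw [Finset.sum_mul]
    exact Finset.sum_congr rfl fun x _ => by ring
  rw [e]
  have hterm : ∀ y ∈ S, ‖((∑ x ∈ S, (x / (x + α)) * g (x, y) : ℝ) : ℂ) * (((y / (y + α) : ℝ) : ℂ)
        * (((y - 2 - α : ℝ) : ℂ) / (y - (3 + η * Complex.I))) ^ 2)‖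
      ≤ (∑ x ∈ S, (x / (x + α)) * g (x, y)) *
      (if y = 0 then 0 else (y - 2 - α) ^ 2 / (y + α)) * (4 / η ^ 2) := by
    intro y hy
    have hy0 := hS y hy
    rw [norm_mul, Complex.norm_real, Real.norm_of_nonneg (hr1 y α hα), mul_assoc]
    refine mul_le_mul_of_nonneg_left ?_ (hr1 y α hα)
    split_ifs with hyz
    · simp [hyz]
    have hn : ‖(y : ℂ) - (3 + η * Complex.I)‖ ^ 2 = (y - 3) ^ 2 + η ^ 2 := by
      rw [← Complex.normSq_eq_norm_sq, Complex.normSq_apply]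
      simp
      ring
    rw [norm_mul, norm_pow, norm_div, Complex.norm_real, Complex.norm_real, div_pow, hn,
      Real.norm_of_nonneg (by positivity), Real.norm_eq_abs, sq_abs]
    have hd : 0 < (y - 3) ^ 2 + η ^ 2 := by positivity
    have hk : y / ((y - 3) ^ 2 + η ^ 2) ≤ 4 / η ^ 2 := by
      rw [div_le_div_iff₀ hd (by positivity)]
      have hη2 : η ^ 2 ≤ 1 := by nlinarith
      nlinarith [mul_nonneg (sq_nonneg η) (sq_nonneg (y - 4)),
        mul_nonneg (sub_nonneg.2 hη2) (sq_nonneg (y - 3))]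
    calc y / (y + α) * ((y - 2 - α) ^ 2 / ((y - 3) ^ 2 + η ^ 2))
        = (y - 2 - α) ^ 2 / (y + α) * (y / ((y - 3) ^ 2 + η ^ 2)) := by ring
      _ ≤ (y - 2 - α) ^ 2 / (y + α) * (4 / η ^ 2) :=
        mul_le_mul_of_nonneg_left hk (by positivity)
  refine (norm_sum_le _ _).trans ((Finset.sum_le_sum hterm).trans ?_)
  rw [← Finset.sum_mul]
  calc _ ≤ 2 * τ * (4 / η ^ 2) := mul_le_mul_of_nonneg_right hV (by positivity)
    _ = 8 * τ / η ^ 2 := by ring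

/-! ### The two-constants argument -/

/-- A two-constants estimate on the upper half disc of radius `1/2`: a function bounded by `s` on
the diameter and by `A` on the arc satisfies, at height `η`, an upper bound in which `A` carries the
factor `exp(-1/(4η))`, up to an overall factor `3`. The comparison function is
`exp((-z² + iz)/η)`: the real part of `-z² + iz` is at most `0` on the diameter, at most `-1/4` on
the arc, and at least `-η` at `iη`. -/
lemma two_constants {f : ℂ → ℂ} (hf : ∀ z : ℂ, ‖z‖ ≤ 1 / 2 → DifferentiableAt ℂ f z)
    {η : ℝ} (hη : 0 < η) (hη1 : η < 1 / 2) {s A : ℝ}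
    (hs : ∀ x : ℝ, |x| ≤ 1 / 2 → ‖f x‖ ≤ s) (hA : ∀ z : ℂ, ‖z‖ = 1 / 2 → ‖f z‖ ≤ A) :
    ‖f (η * Complex.I)‖ ≤ 3 * max s (A * Real.exp (-(1 / (4 * η)))) := by
  set U : Set ℂ := Metric.ball 0 (1 / 2) ∩ {z | 0 < z.im} with hU
  set E : ℂ → ℂ := fun z => Complex.exp ((1 / η : ℝ) * (-z ^ 2 + Complex.I * z)) with hE
  have hopen : IsOpen U := Metric.isOpen_ball.inter (isOpen_lt continuous_const Complex.continuous_im)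
  have hcl : closure U ⊆ Metric.closedBall 0 (1 / 2) ∩ {z | 0 ≤ z.im} := by
    refine closure_minimal ?_
      (Metric.isClosed_closedBall.inter (isClosed_le continuous_const Complex.continuous_im))
    rintro z ⟨hz1, hz2⟩
    exact ⟨Metric.ball_subset_closedBall hz1, le_of_lt (by simpa using hz2)⟩
  have hEn : ∀ z : ℂ, ‖E z‖ = Real.exp ((1 / η) * (-z.re ^ 2 + z.im ^ 2 - z.im)) := by
    intro z
    simp only [hE, Complex.norm_exp]
    rw [Complex.re_ofReal_mul]
    congr 2
    simp [pow_two]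
    ring
  have hd : DiffContOnCl ℂ (fun z => f z * E z) U := by
    refine DifferentiableOn.diffContOnCl fun z hz => DifferentiableAt.differentiableWithinAt ?_
    have h1 := (hcl hz).1
    refine (hf z (by simpa using h1)).mul ?_
    fun_prop
  have hb : ∀ z ∈ frontier U, ‖f z * E z‖ ≤ max s (A * Real.exp (-(1 / (4 * η)))) := by
    intro z hz
    rw [frontier, hopen.interior_eq] at hz
    obtain ⟨h1, h2⟩ := hcl hz.1
    have h1 : ‖z‖ ≤ 1 / 2 := by simpa using h1
    have h2 : 0 ≤ z.im := h2
    rw [norm_mul, hEn]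
    rcases h2.eq_or_lt with him | him
    · refine le_max_of_le_left ?_
      have hzr : z = (z.re : ℂ) := Complex.ext (by simp) (by simp [← him])
      have hle : ‖f z‖ ≤ s := by
        rw [hzr]; exact hs _ ((Complex.abs_re_le_norm z).trans h1)
      refine (mul_le_of_le_one_right (norm_nonneg _) ?_).trans hle
      rw [← him, Real.exp_le_one_iff]
      have : 0 ≤ 1 / η * z.re ^ 2 := by positivity
      linarith
    · refine le_max_of_le_right ?_
      have hn : ‖z‖ = 1 / 2 := by
        refine le_antisymm h1 (not_lt.1 fun h => hz.2 ⟨by simpa using h, him⟩)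
      have hsq : z.re ^ 2 + z.im ^ 2 = 1 / 4 := by
        have := Complex.sq_norm z
        rw [hn, Complex.normSq_apply] at this
        linarith
      have hi : z.im ≤ 1 / 2 := (le_abs_self _).trans ((Complex.abs_im_le_norm z).trans h1)
      refine mul_le_mul (hA z hn) (Real.exp_le_exp.2 ?_) (Real.exp_pos _).le
        ((norm_nonneg _).trans (hA z hn))
      have : -(1 / (4 * η)) = 1 / η * (-(1 / 4)) := by field_simp
      rw [this]
      refine mul_le_mul_of_nonneg_left ?_ (by positivity)
      nlinarith
  have hmem : (η * Complex.I : ℂ) ∈ closure U := by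
    refine subset_closure ⟨?_, ?_⟩
    · simp [abs_of_pos hη]; linarith
    · simpa using hη
  have hmax := Complex.norm_le_of_forall_mem_frontier_norm_le
    (Metric.isBounded_ball.subset Set.inter_subset_left) hd hb hmem
  rw [norm_mul, hEn] at hmax
  have hexp : (1 : ℝ) / 3 ≤ Real.exp ((1 / η) * (-(η * Complex.I : ℂ).re ^ 2
      + (η * Complex.I : ℂ).im ^ 2 - (η * Complex.I : ℂ).im)) := by
    have h3 : Real.exp (-1) ≤ Real.exp ((1 / η) * (-(η * Complex.I : ℂ).re ^ 2
      + (η * Complex.I : ℂ).im ^ 2 - (η * Complex.I : ℂ).im)) := by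
      refine Real.exp_le_exp.2 ?_
      simp
      field_simp
      linarith
    refine le_trans ?_ h3
    rw [Real.exp_neg, one_div]
    exact inv_anti₀ (Real.exp_pos 1) (by linarith [Real.exp_one_lt_d9])
  nlinarith [norm_nonneg (f (η * Complex.I))]

/-- The bound for small `τ`, in terms of the height `η = 16 √τ`. With this choice the test function is
at most `8τ/η² = 1/32` on the real axis, against `1/5` at `1 + iη`, which survives the factor
`3` lost in `two_constants`. -/
lemma norm_lower {τ : ℝ} (hτ0 : 0 < τ) (hτ1 : τ < 1) {g : ℝ × ℝ → ℝ} {S : Finset ℝ}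
    (hS : ∀ x ∈ S, 0 ≤ x)
    (h0 : (0 : ℝ) ∈ S) (h1 : (1 : ℝ) ∈ S) (h2 : 2 - τ ∈ S)
    (hsym : ∀ p, g p + transpose g p = tMove τ p)
    (hr0 : ∀ y, ∑ x ∈ S, g (x, y) = 0)
    (hr1 : ∀ y lam, 0 < lam → 0 ≤ ∑ x ∈ S, (x / (x + lam)) * g (x, y))
    (hr2 : ∀ y, 0 ≤ ∑ x ∈ S, x * g (x, y))
    {η : ℝ} (hη : 0 < η) (hη1 : η < 1 / 2) (hητ : η ^ 2 = 256 * τ) :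
    1 / 7680 * Real.exp (1 / (8 * η)) ≤ ∑ x ∈ S, ∑ y ∈ S, |g (x, y)| := by
  set M := ∑ x ∈ S, ∑ y ∈ S, |g (x, y)| with hM
  set w : ℂ := 3 + η * Complex.I with hw
  have hre : ∀ z : ℂ, ‖z‖ ≤ 1 / 2 → 0 < (1 + z).re := by
    intro z hz
    have := (abs_le.1 ((Complex.abs_re_le_norm z).trans hz)).1
    simp
    linarith
  have key := two_constants (f := fun z => Hfun g S w (1 + z)) (s := 1 / 32)
    (A := M * (4 / η ^ 2))
    (fun z hz => (Hfun_diff g hS w (hre z hz)).comp z (by fun_prop)) hη hη1 ?_ ?_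
  rotate_left
  · intro x hx
    have hx' := (abs_le.1 hx).1
    have := Hfun_real_le hτ0 hτ1 hS h0 h1 h2 hsym hr0 hr1 hr2 (α := 1 + x) (by linarith) hη
      (by linarith)
    push_cast at this
    refine this.trans (le_of_eq ?_)
    rw [hητ]
    field_simp
    norm_num
  · intro z hz
    refine Hfun_norm_le g hS hη (by linarith) (by simp [hw]) ?_ (hre z hz.le)
    have : w - 2 - (1 + z) = η * Complex.I - z := by rw [hw]; ring
    rw [this]
    refine (norm_sub_le _ _).trans ?_
    rw [hz]
    simp [abs_of_pos hη]
    linarith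
  have hdiag : Hfun g S w (1 + η * Complex.I) = 1 / (1 + (1 + η * Complex.I)) ^ 2 := by
    have : w = 2 + (1 + η * Complex.I) := by rw [hw]; ring
    rw [this]
    exact Hfun_diag h0 h1 h2 hsym (by simpa using hη.ne')
  have hlow : 1 / 5 ≤ ‖Hfun g S w (1 + η * Complex.I)‖ := by
    rw [hdiag, norm_div, norm_one, norm_pow, ← Complex.normSq_eq_norm_sq, Complex.normSq_apply]
    refine one_div_le_one_div_of_le ?_ ?_ <;> simp <;> nlinarith
  have hmax := hlow.trans key
  rcases max_cases (1 / 32 : ℝ) (M * (4 / η ^ 2) * Real.exp (-(1 / (4 * η)))) with ⟨h, _⟩ | ⟨h, _⟩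
  · rw [h] at hmax
    norm_num at hmax
  rw [h, Real.exp_neg] at hmax
  set e := Real.exp (1 / (8 * η)) with he
  have hee : Real.exp (1 / (4 * η)) = e * e := by
    rw [he, ← Real.exp_add]; congr 1; field_simp; norm_num
  have hepos : 0 < e := Real.exp_pos _
  rw [hee] at hmax
  have hM2 : η ^ 2 * (e * e) ≤ 60 * M := by
    have : 3 * (M * (4 / η ^ 2) * (e * e)⁻¹) = 12 * M / (η ^ 2 * (e * e)) := by
      field_simp; ring
    rw [this, div_le_div_iff₀ (by norm_num) (by positivity)] at hmax
    linarith
  -- half of the exponent absorbs the factor `η ^ 2`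
  have hquad : 1 ≤ 128 * (η ^ 2 * e) := by
    have := Real.quadratic_le_exp_of_nonneg (x := 1 / (8 * η)) (by positivity)
    have h8 : 0 ≤ 1 / (8 * η) := by positivity
    have h2 : (1 / (8 * η)) ^ 2 / 2 ≤ e := by linarith
    have h3 := mul_le_mul_of_nonneg_left h2 (sq_nonneg η)
    have h4 : η ^ 2 * ((1 / (8 * η)) ^ 2 / 2) = 1 / 128 := by field_simp; norm_num
    linarith
  nlinarith [mul_le_mul_of_nonneg_right hquad hepos.le]

/-- There are universal constants `C, c > 0` such that any horizontally valid
move `g` with `g + gᵀ = t_τ` (for `τ ∈ (0,1)`) has `1`-norm at least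
`C · exp(c · τ^{-1/2})`. -/
theorem stmt_18 :
    ∃ C c : ℝ, 0 < C ∧ 0 < c ∧
      ∀ τ : ℝ, τ ∈ Set.Ioo (0 : ℝ) 1 →
      ∀ g : ℝ × ℝ → ℝ, IsMove2 g → HorizValid g →
        (∀ p, g p + transpose g p = tMove τ p) →
      C * Real.exp (c * τ ^ (-(1 / 2) : ℝ)) ≤ ∑ᶠ p, |g p| := by
  refine ⟨1 / 7680, 1 / 128, by norm_num, by norm_num, ?_⟩
  rintro τ ⟨hτ0, hτ1⟩ g ⟨hfin, hneg⟩ hval hsym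
  set S : Finset ℝ := hfin.toFinset.image Prod.fst ∪ hfin.toFinset.image Prod.snd ∪ {0, 1, 2 - τ}
    with hSdef
  have h0 : (0 : ℝ) ∈ S := by simp [hSdef]
  have h1 : (1 : ℝ) ∈ S := by simp [hSdef]
  have h2 : 2 - τ ∈ S := by simp [hSdef]
  have hmem : ∀ p, g p ≠ 0 → p.1 ∈ S ∧ p.2 ∈ S := by
    intro p hp
    have hp' : p ∈ hfin.toFinset := by simpa using hp
    constructor
    · exact Finset.mem_union_left _ (Finset.mem_union_left _ (Finset.mem_image_of_mem _ hp'))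
    · exact Finset.mem_union_left _ (Finset.mem_union_right _ (Finset.mem_image_of_mem _ hp'))
  have hS : ∀ x ∈ S, 0 ≤ x := by
    intro x hx
    have hnn : ∀ p, g p ≠ 0 → 0 ≤ p.1 ∧ 0 ≤ p.2 := fun p hp =>
      ⟨not_lt.1 fun h => hp (hneg p (Or.inl h)), not_lt.1 fun h => hp (hneg p (Or.inr h))⟩
    simp only [hSdef, Finset.mem_union, Finset.mem_image, Set.Finite.mem_toFinset,
      Function.mem_support, Finset.mem_insert, Finset.mem_singleton] at hx
    rcases hx with (⟨p, hp, rfl⟩ | ⟨p, hp, rfl⟩) | rfl | rfl | rfl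
    · exact (hnn p hp).1
    · exact (hnn p hp).2
    · exact le_rfl
    · exact zero_le_one
    · linarith
  have hrow : ∀ (y : ℝ) (c : ℝ → ℝ), ∑ᶠ x, c x * g (x, y) = ∑ x ∈ S, c x * g (x, y) := by
    intro y c
    refine finsum_eq_sum_of_support_subset _ fun x hx => ?_
    exact (hmem (x, y) (right_ne_zero_of_mul hx)).1
  have hr0 : ∀ y, ∑ x ∈ S, g (x, y) = 0 := by
    intro y
    have := (hval y).1
    have h := hrow y (fun _ => 1)
    simp only [one_mul] at h
    rw [← h]; exact this
  have hr1 : ∀ y lam, 0 < lam → 0 ≤ ∑ x ∈ S, (x / (x + lam)) * g (x, y) := by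
    intro y lam hl
    rw [← hrow y (fun x => x / (x + lam))]
    exact (hval y).2.1 lam hl
  have hr2 : ∀ y, 0 ≤ ∑ x ∈ S, x * g (x, y) := by
    intro y
    rw [← hrow y (fun x => x)]
    exact (hval y).2.2
  have hnorm : ∑ᶠ p, |g p| = ∑ x ∈ S, ∑ y ∈ S, |g (x, y)| := by
    rw [← Finset.sum_product']
    refine finsum_eq_sum_of_support_subset _ fun p hp => ?_
    have hp' : g p ≠ 0 := by simpa using hp
    simpa using hmem p hp'
  rw [hnorm]
  have hsq : 0 < √τ := Real.sqrt_pos.2 hτ0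
  have hpow : τ ^ (-(1 / 2) : ℝ) = 1 / √τ := by
    rw [Real.rpow_neg hτ0.le, ← Real.sqrt_eq_rpow, one_div]
  rw [hpow]
  by_cases hsmall : √τ < 1 / 32
  · have := norm_lower hτ0 hτ1 hS h0 h1 h2 hsym hr0 hr1 hr2 (η := 16 * √τ) (by positivity)
      (by linarith) (by rw [mul_pow, Real.sq_sqrt hτ0.le]; norm_num)
    have he : 1 / 128 * (1 / √τ) = 1 / (8 * (16 * √τ)) := by field_simp; norm_num
    rwa [he]
  · -- away from `τ = 0` the bound is a constant, and the entry `g(1,1) = 1` suffices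
    have hone : g (1, 1) = 1 := by
      have := hsym (1, 1)
      simp [transpose, tMove, pt] at this
      linarith
    have hge : 1 ≤ ∑ x ∈ S, ∑ y ∈ S, |g (x, y)| := by
      calc (1 : ℝ) = |g (1, 1)| := by rw [hone, abs_one]
        _ ≤ ∑ y ∈ S, |g (1, y)| :=
          Finset.single_le_sum (f := fun y => |g (1, y)|) (fun _ _ => abs_nonneg _) h1
        _ ≤ _ := Finset.single_le_sum (f := fun x => ∑ y ∈ S, |g (x, y)|)
          (fun _ _ => Finset.sum_nonneg fun _ _ => abs_nonneg _) h1
    have hle : 1 / 128 * (1 / √τ) ≤ 1 := by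
      have : 1 / √τ ≤ 1 / (1 / 32) := one_div_le_one_div_of_le (by norm_num) (not_lt.1 hsmall)
      norm_num at this ⊢
      linarith
    have := (Real.exp_le_exp.2 hle).trans Real.exp_one_lt_d9.le
    linarith
end
end

section
/- There exist universal constants C > 0 and c > 0 with the following property. Let ε ∈ (0,1/2), and suppose (m₁, m₂) is a valid time-independent point game such that m₁ + m₂ = ⟦1/2 + ε, 1/2 + ε⟧ − (1/2)·⟦1,0⟧ − (1/2)·⟦0,1⟧. Then ‖m₁‖₁ + ‖m₂‖₁ ≥ C·exp(c·ε^{−1/2}). -/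
/-!
For `λ > 0` consider the row weights `g_λ(y) = ∑ₓ m₁(x,y)·x/(x+λ)`, which are nonnegative because
`m₁` is horizontally valid. At `ε = 0` Jensen's inequality for the concave function `y ↦ y/(y+λ)`,
applied to the rows of `m₁` and the columns of `m₂`, would have to be an equality, so `g_λ` would be
concentrated on the single row `y = 1 + λ`. For `ε > 0` the same computation shows that the weighted
second moment `∑ g_λ(y)(y-1-λ)²/(y+λ)` is at most `2ε`, while the total mass of `g_λ` stays bounded
below (`row_concentration`).

Hence, for the strip `J` of rows within `w = 60√ε` of `y = 3`, the function
`G(λ) = ∑_{y ∈ J} g_λ(y)` is at least `3/100` at `λ = 2` and at most `14/3600` for `λ ∈ [1,3]`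
with `|λ - 2| ≥ 3w/√2`: it has a spike of width of order `√ε`. On the other hand
`G` is a combination of the kernels `x/(x+λ)` with total weight at most `‖m₁‖₁`, and these are
approximated on `[1,3]` by polynomials of degree `n` with error exponentially small in `n`. By the
extremal property of Chebyshev polynomials, a polynomial of degree `n` grows across a gap of width
of order `w` by a factor of at most `exp(O(nw))` (`abs_eval_zero_le_of_gap`, `abs_kernelSum_two_le`).
Taking `n` of order `1/w`, the spike is possible only if `‖m₁‖₁` is at least
`exp(Ω(1/w))` (`weight_lower_bound`).
-/

open scoped BigOperators Classical

noncomputable section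

/-! ### Extrapolation of polynomials and kernel sums -/

/-- Chebyshev extrapolation across a gap: a polynomial of degree at most `n` that is bounded by `M`
on `[θ²/8, 1]` is bounded by `M · exp(nθ)` at `0`. The affine map
`u ↦ (cosh θ - u)/(cosh θ + 1)` sends `[-1,1]` into `[θ²/8, 1]` and `cosh θ` to `0`, and
`T_n(cosh θ) = cosh(nθ)`. -/
lemma abs_eval_zero_le_of_gap {n : ℕ} {P : Polynomial ℝ} (hP : P.degree ≤ n) {θ M : ℝ}
    (hθ1 : |θ| ≤ 1) (hM : 0 < M)
    (hb : ∀ z : ℝ, θ ^ 2 / 8 ≤ z → z ≤ 1 → |P.eval z| ≤ M) :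
    |P.eval 0| ≤ M * Real.exp (n * |θ|) := by
  have hc1 : 1 + θ ^ 2 / 2 ≤ Real.cosh θ := by
    have h1 : Real.cosh θ = 1 + 2 * Real.sinh (|θ| / 2) ^ 2 := by
      rw [← Real.cosh_abs, show |θ| = 2 * (|θ| / 2) by ring, Real.cosh_two_mul, Real.cosh_sq]
      ring_nf
    have h2 : |θ| / 2 ≤ Real.sinh (|θ| / 2) := Real.self_le_sinh_iff.2 (by positivity)
    have h3 : (|θ| / 2) ^ 2 ≤ Real.sinh (|θ| / 2) ^ 2 := pow_le_pow_left₀ (by positivity) h2 2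
    rw [div_pow, sq_abs] at h3
    linarith
  have hc2 : Real.cosh θ ≤ 3 := by
    have h1 : Real.cosh θ = Real.cosh |θ| := (Real.cosh_abs θ).symm
    rw [h1, Real.cosh_eq]
    have h2 : Real.exp |θ| ≤ Real.exp 1 := Real.exp_le_exp.2 hθ1
    have h3 : Real.exp (-|θ|) ≤ 1 := Real.exp_le_one_iff.2 (by simp)
    have := Real.exp_one_lt_d9
    linarith
  set ch := Real.cosh θ with hch
  have hpos : 0 < ch + 1 := by nlinarith [sq_nonneg θ]
  have key : ∀ σ : ℝ, |σ| = 1 → σ * P.eval 0 ≤ M * Real.exp (n * |θ|) := by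
    intro σ hσ
    set Q : Polynomial ℝ := Polynomial.C (σ / M) *
      P.comp (Polynomial.C (-1 / (ch + 1)) * Polynomial.X + Polynomial.C (ch / (ch + 1))) with hQ
    have hev : ∀ u : ℝ, Q.eval u = σ / M * P.eval ((ch - u) / (ch + 1)) := by
      intro u
      simp only [hQ, Polynomial.eval_mul, Polynomial.eval_C, Polynomial.eval_comp,
        Polynomial.eval_add, Polynomial.eval_X]
      congr 2
      field_simp
      ring
    have hdeg : Q.degree ≤ n := by
      rw [← Polynomial.natDegree_le_iff_degree_le] at hP ⊢
      refine (Polynomial.natDegree_C_mul_le _ _).trans ?_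
      refine Polynomial.natDegree_comp_le.trans ?_
      have : (Polynomial.C (-1 / (ch + 1)) * Polynomial.X +
          Polynomial.C (ch / (ch + 1))).natDegree ≤ 1 := Polynomial.natDegree_linear_le
      calc P.natDegree * _ ≤ P.natDegree * 1 := Nat.mul_le_mul_left _ this
        _ ≤ n := by simpa using hP
    have hbd : ∀ u ∈ Set.Icc (-1 : ℝ) 1, |Q.eval u| ≤ 1 := by
      intro u hu
      rw [hev, abs_mul, abs_div, hσ, abs_of_pos hM]
      have h := hb ((ch - u) / (ch + 1))
        (by rw [le_div_iff₀ hpos]; nlinarith [hu.2, sq_nonneg θ])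
        (by rw [div_le_one hpos]; linarith [hu.1])
      rw [one_div, inv_mul_le_iff₀ hM]
      linarith
    have hmain := Polynomial.Chebyshev.eval_iterate_derivative_le_of_forall_abs_le_one
      (k := 0) (x := ch) (by nlinarith [sq_nonneg θ]) hdeg hbd
    simp only [Function.iterate_zero, id_eq] at hmain
    rw [hev, hch, Polynomial.Chebyshev.T_real_cosh] at hmain
    simp only [sub_self, zero_div] at hmain
    have hexp : Real.cosh (((n : ℤ) : ℝ) * θ) ≤ Real.exp (n * |θ|) := by
      rw [← Real.cosh_abs, Real.cosh_eq, abs_mul]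
      have h0 : 0 ≤ |((n : ℤ) : ℝ)| * |θ| := by positivity
      have : Real.exp (-(|((n : ℤ) : ℝ)| * |θ|)) ≤ Real.exp (|((n : ℤ) : ℝ)| * |θ|) :=
        Real.exp_le_exp.2 (by linarith)
      have hn : |((n : ℤ) : ℝ)| = n := by simp
      rw [hn] at this ⊢
      linarith
    have := hmain.trans hexp
    rw [div_mul_eq_mul_div, div_le_iff₀ hM] at this
    linarith
  rw [abs_le]
  constructor
  · have := key (-1) (by simp); linarith
  · have := key 1 (by simp); linarith

/-- Extrapolation for a combination `G(λ) = ∑ n(x)·x/(x+λ)` of the kernels: if `|G| ≤ η` on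
`[1,3]` away from a gap of width proportional to `θ` about `λ = 2`, then `G(2)` is controlled by
`η` and the total weight `∑ |n(x)|`. The even part of `G` about `2` is a function of
`z = (λ-2)²` that is, up to an error `4⁻ᵐ ∑ |n(x)|`, a polynomial of degree `m` in `z`. -/
lemma abs_kernelSum_two_le {S : Finset ℝ} (hS : ∀ x ∈ S, 0 ≤ x) (f : ℝ → ℝ) {θ η N : ℝ}
    (hθ1 : |θ| ≤ 1) (hη : 0 < η) (hN : ∑ x ∈ S, |f x| ≤ N)
    (hb : ∀ t : ℝ, θ ^ 2 / 8 ≤ t ^ 2 → t ^ 2 ≤ 1 → |∑ x ∈ S, f x * (x / (x + (2 + t)))| ≤ η)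
    (m : ℕ) :
    |∑ x ∈ S, f x * (x / (x + 2))| ≤ (η + N * (1 / 4) ^ m) * Real.exp (m * |θ|) := by
  have hN0 : 0 ≤ N := (Finset.sum_nonneg fun x _ => abs_nonneg _).trans hN
  set P : Polynomial ℝ := ∑ x ∈ S, ∑ k ∈ Finset.range (m + 1),
    Polynomial.C (f x * (x / (x + 2)) * (((x + 2) ^ 2)⁻¹) ^ k) * Polynomial.X ^ k with hP
  have hev : ∀ z : ℝ, P.eval z = ∑ x ∈ S, f x * (x / (x + 2)) *
      ∑ k ∈ Finset.range (m + 1), (z / (x + 2) ^ 2) ^ k := by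
    intro z
    simp only [hP, Polynomial.eval_finsetSum, Polynomial.eval_mul, Polynomial.eval_C,
      Polynomial.eval_pow, Polynomial.eval_X]
    refine Finset.sum_congr rfl fun x _ => ?_
    rw [Finset.mul_sum]
    refine Finset.sum_congr rfl fun k _ => ?_
    rw [div_eq_mul_inv z, mul_pow]
    ring
  have hdeg : P.degree ≤ m := by
    refine (Polynomial.degree_sum_le _ _).trans (Finset.sup_le fun x _ => ?_)
    refine (Polynomial.degree_sum_le _ _).trans (Finset.sup_le fun k hk => ?_)
    refine (Polynomial.degree_C_mul_X_pow_le _ _).trans ?_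
    have := Finset.mem_range.1 hk
    exact_mod_cast Nat.lt_succ_iff.1 this
  have h0 : P.eval 0 = ∑ x ∈ S, f x * (x / (x + 2)) := by
    rw [hev]
    refine Finset.sum_congr rfl fun x _ => ?_
    rw [Finset.sum_range_succ']
    simp
  rw [← h0]
  refine abs_eval_zero_le_of_gap hdeg hθ1 (by positivity) ?_
  intro z hz1 hz2
  have hz0 : 0 ≤ z := le_trans (by positivity) hz1
  set t := Real.sqrt z with ht
  have htz : t ^ 2 = z := Real.sq_sqrt hz0
  have ht0 : 0 ≤ t := Real.sqrt_nonneg z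
  have ht1 : t ≤ 1 := by nlinarith
  have hp := hb t (by rw [htz]; exact hz1) (by rw [htz]; exact hz2)
  have hm := hb (-t) (by rw [neg_sq, htz]; exact hz1) (by rw [neg_sq, htz]; exact hz2)
  -- the even part of the kernel sum, minus the tail of the geometric series, is the polynomial
  have hdecomp : P.eval z = ((∑ x ∈ S, f x * (x / (x + (2 + t)))) +
      (∑ x ∈ S, f x * (x / (x + (2 + -t))))) / 2 -
      ∑ x ∈ S, f x * ((x / (x + 2)) *
        ((z / (x + 2) ^ 2) ^ (m + 1) / (1 - z / (x + 2) ^ 2))) := by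
    rw [hev, ← Finset.sum_add_distrib, Finset.sum_div, ← Finset.sum_sub_distrib]
    refine Finset.sum_congr rfl fun x hx => ?_
    have hx0 := hS x hx
    have hr : z / (x + 2) ^ 2 < 1 := by
      rw [div_lt_one (by positivity)]; nlinarith
    rw [geom_sum_eq hr.ne]
    have e1 : x / (x + (2 + t)) + x / (x + (2 + -t)) =
        2 * ((x / (x + 2)) / (1 - z / (x + 2) ^ 2)) := by
      have a1 : x + (2 + t) ≠ 0 := by positivity
      have a2 : x + (2 + -t) ≠ 0 := by linarith
      have a3 : x + 2 ≠ 0 := by positivity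
      have a4 : (x + 2) ^ 2 - t ^ 2 ≠ 0 := by nlinarith
      rw [← htz]
      have a5 : 1 - t ^ 2 / (x + 2) ^ 2 = ((x + 2) ^ 2 - t ^ 2) / (x + 2) ^ 2 := by
        field_simp
      rw [a5]
      rw [div_add_div _ _ a1 a2, div_div_div_eq, ← mul_div_assoc, div_eq_div_iff
        (mul_ne_zero a1 a2) (mul_ne_zero a3 a4)]
      ring
    have hd : 1 - z / (x + 2) ^ 2 ≠ 0 := by linarith
    have hd' : z / (x + 2) ^ 2 - 1 ≠ 0 := by linarith
    rw [← mul_add, e1]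
    generalize z / (x + 2) ^ 2 = r at *
    generalize x / (x + 2) = κ
    field_simp
    ring
  have htail : |∑ x ∈ S, f x * ((x / (x + 2)) *
        ((z / (x + 2) ^ 2) ^ (m + 1) / (1 - z / (x + 2) ^ 2)))| ≤ N * (1 / 4) ^ m := by
    refine (Finset.abs_sum_le_sum_abs _ _).trans ?_
    refine le_trans ?_ (mul_le_mul_of_nonneg_right hN (by positivity))
    rw [Finset.sum_mul]
    refine Finset.sum_le_sum fun x hx => ?_
    rw [abs_mul]
    refine mul_le_mul_of_nonneg_left ?_ (abs_nonneg _)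
    have hx0 := hS x hx
    have hr0 : 0 ≤ z / (x + 2) ^ 2 := by positivity
    have hr : z / (x + 2) ^ 2 ≤ 1 / 4 := by
      rw [div_le_iff₀ (by positivity)]; nlinarith
    have hk0 : 0 ≤ x / (x + 2) := by positivity
    have hk1 : x / (x + 2) ≤ 1 := by rw [div_le_one (by positivity)]; linarith
    generalize z / (x + 2) ^ 2 = r at *
    have hpow : r ^ (m + 1) ≤ (1 / 4) ^ (m + 1) := pow_le_pow_left₀ hr0 hr _
    have hq0 : 0 ≤ r ^ (m + 1) / (1 - r) := div_nonneg (by positivity) (by linarith)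
    have hq1 : r ^ (m + 1) / (1 - r) ≤ (1 / 4) ^ m := by
      rw [div_le_iff₀ (by linarith)]
      refine hpow.trans ?_
      rw [pow_succ]
      exact mul_le_mul_of_nonneg_left (by linarith) (by positivity)
    rw [abs_of_nonneg (mul_nonneg hk0 hq0)]
    calc _ ≤ 1 * (r ^ (m + 1) / (1 - r)) := mul_le_mul_of_nonneg_right hk1 hq0
      _ ≤ _ := by rw [one_mul]; exact hq1
  rw [hdecomp]
  rw [abs_le] at hp hm htail ⊢
  constructor <;> linarith [hp.1, hp.2, hm.1, hm.2, htail.1, htail.2]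

/-! ### Concentration of the row weights -/

/-- Concentration of the row weights `g(y) = ∑ₓ m₁(x,y)·x/(x+λ)`: their total mass is known
exactly, and their second moment about `1+λ`, weighted by `1/(y+λ)`, is at most `2s - 1`.
This is the equality case of Jensen's inequality for the concave function `y ↦ y/(y+λ)`, made
quantitative by
`(1+2λ)²·y/(y+λ) = (1+λ)² + λy - λ(y-1-λ)²/(y+λ)`, applied to the rows of `m₁` and to the
columns of `m₂`. The hypothesis `hsum` says that `m₁ + m₂ = ⟦s,s⟧ - ½⟦1,0⟧ - ½⟦0,1⟧`. -/
lemma row_concentration {S : Finset ℝ} (hS : ∀ x ∈ S, 0 ≤ x) {m₁ m₂ : ℝ → ℝ → ℝ} {s lam : ℝ}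
    (hs : 1 / 2 ≤ s) (hl : 0 < lam)
    (r0 : ∀ y, ∑ x ∈ S, m₁ x y = 0)
    (r2 : ∀ y, 0 ≤ ∑ x ∈ S, m₁ x y * x)
    (c0 : ∀ x, ∑ y ∈ S, m₂ x y = 0) (c1 : ∀ x, 0 ≤ ∑ y ∈ S, m₂ x y * (y / (y + lam)))
    (c2 : ∀ x, 0 ≤ ∑ y ∈ S, m₂ x y * y)
    (hsum : ∀ φ ψ : ℝ → ℝ, ∑ x ∈ S, ∑ y ∈ S, (m₁ x y + m₂ x y) * (φ x * ψ y) =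
      φ s * ψ s - 1 / 2 * (φ 1 * ψ 0) - 1 / 2 * (φ 0 * ψ 1)) :
    (∑ y ∈ S, (∑ x ∈ S, m₁ x y * (x / (x + lam))) = s / (s + lam) - 1 / 2 * (1 / (1 + lam))) ∧
    ∑ y ∈ S, (∑ x ∈ S, m₁ x y * (x / (x + lam))) * ((y - (1 + lam)) ^ 2 / (y + lam))
      ≤ 2 * s - 1 := by
  set k : ℝ → ℝ := fun x => x / (x + lam) with hk
  set q : ℝ → ℝ := fun y => (y - (1 + lam)) ^ 2 / (y + lam) with hq
  have hk0 : k 0 = 0 := by simp [hk]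
  have hkn : ∀ x ∈ S, 0 ≤ k x := fun x hx => by have := hS x hx; simp only [hk]; positivity
  have hqn : ∀ x ∈ S, 0 ≤ q x := fun x hx => by have := hS x hx; simp only [hq]; positivity
  have hkq : ∀ y ∈ S, (1 + 2 * lam) ^ 2 * k y = (1 + lam) ^ 2 + lam * y - lam * q y := by
    intro y hy
    have := hS y hy
    have : y + lam ≠ 0 := by positivity
    simp only [hk, hq]
    field_simp
    ring
  -- splitting a bilinear total into its two halves
  have split : ∀ φ ψ : ℝ → ℝ, (∑ y ∈ S, (∑ x ∈ S, m₁ x y * φ x) * ψ y) +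
      (∑ x ∈ S, (∑ y ∈ S, m₂ x y * ψ y) * φ x) =
      φ s * ψ s - 1 / 2 * (φ 1 * ψ 0) - 1 / 2 * (φ 0 * ψ 1) := by
    intro φ ψ
    rw [← hsum]
    simp_rw [add_mul, Finset.sum_add_distrib, Finset.sum_mul]
    congr 1
    · rw [Finset.sum_comm]
      exact Finset.sum_congr rfl fun x _ => Finset.sum_congr rfl fun y _ => by ring
    · exact Finset.sum_congr rfl fun x _ => Finset.sum_congr rfl fun y _ => by ring
  set g : ℝ → ℝ := fun y => ∑ x ∈ S, m₁ x y * k x with hg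
  set h : ℝ → ℝ := fun x => ∑ y ∈ S, m₂ x y * k y with hh
  have A1 : ∑ y ∈ S, g y = k s - 1 / 2 * k 1 := by
    have := split k (fun _ => 1)
    simp only [mul_one, c0, zero_mul, Finset.sum_const_zero, hk0] at this
    linarith
  have A2 : ∑ x ∈ S, h x = k s - 1 / 2 * k 1 := by
    have := split (fun _ => 1) k
    simp only [mul_one, r0, zero_mul, Finset.sum_const_zero, hk0] at this
    linarith
  have B1 : ∑ y ∈ S, g y * y ≤ s * k s := by
    have := split k (fun y => y)
    have h2 : 0 ≤ ∑ x ∈ S, (∑ y ∈ S, m₂ x y * y) * k x :=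
      Finset.sum_nonneg fun x hx => mul_nonneg (c2 x) (hkn x hx)
    simp only [hk0] at this
    linarith
  have B2 : ∑ x ∈ S, h x * x ≤ s * k s := by
    have := split (fun x => x) k
    have h2 : 0 ≤ ∑ y ∈ S, (∑ x ∈ S, m₁ x y * x) * k y :=
      Finset.sum_nonneg fun x hx => mul_nonneg (r2 x) (hkn x hx)
    simp only [hk0] at this
    linarith
  have T : ∑ y ∈ S, g y * k y + ∑ x ∈ S, h x * k x = k s * k s := by
    have := split k k
    simp only [hk0] at this
    linarith
  have expand : ∀ u : ℝ → ℝ, (1 + 2 * lam) ^ 2 * ∑ y ∈ S, u y * k y =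
      (1 + lam) ^ 2 * ∑ y ∈ S, u y + lam * ∑ y ∈ S, u y * y - lam * ∑ y ∈ S, u y * q y := by
    intro u
    simp only [Finset.mul_sum]
    rw [← Finset.sum_add_distrib, ← Finset.sum_sub_distrib]
    refine Finset.sum_congr rfl fun y hy => ?_
    linear_combination u y * hkq y hy
  have E1 := expand g
  have E2 := expand h
  have V2 : 0 ≤ ∑ x ∈ S, h x * q x :=
    Finset.sum_nonneg fun x hx => mul_nonneg (c1 x) (hqn x hx)
  refine ⟨A1, ?_⟩
  rw [A1] at E1
  rw [A2] at E2
  have hk1 : (1 + lam) * k 1 = 1 := by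
    simp only [hk]; field_simp
  have hks : (s + lam) * k s = s := by
    simp only [hk]; field_simp
  have main : lam * ∑ y ∈ S, g y * q y ≤
      2 * (1 + lam) ^ 2 * k s - (1 + lam) + 2 * lam * (s * k s)
        - (1 + 2 * lam) ^ 2 * (k s * k s) := by
    have e : (1 + lam) ^ 2 * k 1 = 1 + lam := by linear_combination (1 + lam) * hk1
    have T' : (1 + 2 * lam) ^ 2 * ∑ y ∈ S, g y * k y +
      (1 + 2 * lam) ^ 2 * ∑ x ∈ S, h x * k x = (1 + 2 * lam) ^ 2 * (k s * k s) := by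
      rw [← mul_add, T]
    have b1 := mul_le_mul_of_nonneg_left B1 hl.le
    have b2 := mul_le_mul_of_nonneg_left B2 hl.le
    have v2 := mul_nonneg hl.le V2
    nlinarith
  have fin : 2 * (1 + lam) ^ 2 * k s - (1 + lam) + 2 * lam * (s * k s)
        - (1 + 2 * lam) ^ 2 * (k s * k s) ≤ lam * (2 * s - 1) := by
    have e : k s = s / (s + lam) := rfl
    have hp : 0 < s + lam := by linarith
    have : lam * (2 * s - 1) - (2 * (1 + lam) ^ 2 * k s - (1 + lam) + 2 * lam * (s * k s)
        - (1 + 2 * lam) ^ 2 * (k s * k s)) = lam * (2 * s - 1) ^ 2 * lam / (s + lam) ^ 2 := by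
      rw [e]; field_simp; ring
    have h2 : 0 ≤ lam * (2 * s - 1) ^ 2 * lam / (s + lam) ^ 2 := by positivity
    linarith
  exact le_of_mul_le_mul_left (main.trans fin) hl

/-- The strip of rows within `w = 60√ε` of `y = 3` carries most of the row weights at `λ = 2`, but
only a small fraction of them for `λ ∈ [1,3]` at distance at least `3w/√2` from `2`. By
`abs_kernelSum_two_le`, with degree about `1/(6w)`, this forces the total weight of `m₁` to be
exponential in `1/w`. -/
lemma weight_lower_bound {S : Finset ℝ} (hS : ∀ x ∈ S, 0 ≤ x) {m₁ m₂ : ℝ → ℝ → ℝ} {ε w : ℝ}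
    (hε : 0 < ε) (hw : 0 < w) (hwε : w ^ 2 = 3600 * ε) (hw6 : 6 * w ≤ 1)
    (r0 : ∀ y, ∑ x ∈ S, m₁ x y = 0)
    (r1 : ∀ lam, 0 < lam → ∀ y, 0 ≤ ∑ x ∈ S, m₁ x y * (x / (x + lam)))
    (r2 : ∀ y, 0 ≤ ∑ x ∈ S, m₁ x y * x)
    (c0 : ∀ x, ∑ y ∈ S, m₂ x y = 0)
    (c1 : ∀ lam, 0 < lam → ∀ x, 0 ≤ ∑ y ∈ S, m₂ x y * (y / (y + lam)))
    (c2 : ∀ x, 0 ≤ ∑ y ∈ S, m₂ x y * y)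
    (hsum : ∀ φ ψ : ℝ → ℝ, ∑ x ∈ S, ∑ y ∈ S, (m₁ x y + m₂ x y) * (φ x * ψ y) =
      φ (1 / 2 + ε) * ψ (1 / 2 + ε) - 1 / 2 * (φ 1 * ψ 0) - 1 / 2 * (φ 0 * ψ 1)) :
    1 / 600 * Real.exp (1 / (6 * w)) ≤ ∑ x ∈ S, ∑ y ∈ S, |m₁ x y| := by
  set N := ∑ x ∈ S, ∑ y ∈ S, |m₁ x y| with hN
  set J := S.filter fun y => |y - 3| ≤ w with hJ
  have conc := fun lam (hl : 0 < lam) => row_concentration hS (s := 1 / 2 + ε) (lam := lam)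
    (by linarith) hl r0 r2 c0 (c1 lam hl) c2 hsum
  set f : ℝ → ℝ := fun x => ∑ y ∈ J, m₁ x y with hf
  have hfN : ∑ x ∈ S, |f x| ≤ N := by
    refine Finset.sum_le_sum fun x _ => (Finset.abs_sum_le_sum_abs _ _).trans ?_
    exact Finset.sum_le_sum_of_subset_of_nonneg (Finset.filter_subset _ _)
      fun _ _ _ => abs_nonneg _
  have hfG : ∀ lam : ℝ, ∑ x ∈ S, f x * (x / (x + lam)) =
      ∑ y ∈ J, ∑ x ∈ S, m₁ x y * (x / (x + lam)) := by
    intro lam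
    simp only [hf, Finset.sum_mul]
    exact Finset.sum_comm
  have hbig : 3 / 100 ≤ ∑ x ∈ S, f x * (x / (x + 2)) := by
    obtain ⟨hA, hV⟩ := conc 2 (by norm_num)
    rw [hfG]
    set g : ℝ → ℝ := fun y => ∑ x ∈ S, m₁ x y * (x / (x + 2)) with hg
    have hsp := Finset.sum_filter_add_sum_filter_not S (fun y => |y - 3| ≤ w) g
    have hout : (∑ y ∈ S.filter (fun y => ¬ |y - 3| ≤ w), g y) * (w ^ 2 / 6) ≤ 2 * ε := by
      rw [Finset.sum_mul]
      refine le_trans (le_trans ?_ (Finset.sum_le_sum_of_subset_of_nonneg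
        (Finset.filter_subset (fun y => ¬ |y - 3| ≤ w) S) ?_)) (hV.trans (by linarith))
      · refine Finset.sum_le_sum fun y hy => ?_
        rw [Finset.mem_filter] at hy
        have hy0 := hS y hy.1
        refine mul_le_mul_of_nonneg_left ?_ (r1 2 (by norm_num) y)
        rw [div_le_div_iff₀ (by norm_num) (by linarith)]
        have hd := not_le.1 hy.2
        have h1 : y - 3 ≤ |y - 3| := le_abs_self _
        have h2 : (y - (1 + 2)) ^ 2 = |y - 3| ^ 2 := by rw [sq_abs]; ring
        rw [h2]
        generalize |y - 3| = d at *
        have h3 : w ^ 2 ≤ d ^ 2 := by nlinarith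
        have h4 : w ^ 2 * d ≤ d ^ 2 := by nlinarith [mul_nonneg hw.le (hw.le.trans hd.le)]
        nlinarith [sq_nonneg w]
      · intro y hy _
        have hy0 := hS y hy
        exact mul_nonneg (r1 2 (by norm_num) y) (by positivity)
    have hout' : ∑ y ∈ S.filter (fun y => ¬ |y - 3| ≤ w), g y ≤ 12 / 3600 := by
      rw [hwε] at hout
      by_contra hcon
      rw [not_le] at hcon
      nlinarith
    have hA' : (1 : ℝ) / 30 ≤ ∑ y ∈ S, g y := by
      rw [hA]
      have : (1 : ℝ) / 5 ≤ (1 / 2 + ε) / (1 / 2 + ε + 2) := by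
        rw [div_le_div_iff₀ (by norm_num) (by linarith)]; linarith
      linarith
    rw [← hsp] at hA'
    linarith
  have hsmall : ∀ t : ℝ, (6 * w) ^ 2 / 8 ≤ t ^ 2 → t ^ 2 ≤ 1 →
      |∑ x ∈ S, f x * (x / (x + (2 + t)))| ≤ 14 / 3600 := by
    intro t ht1 ht2
    have htm : -1 ≤ t ∧ t ≤ 1 := abs_le.1 (by rwa [← sq_le_one_iff_abs_le_one])
    obtain ⟨-, hV⟩ := conc (2 + t) (by linarith)
    rw [hfG]
    set g : ℝ → ℝ := fun y => ∑ x ∈ S, m₁ x y * (x / (x + (2 + t))) with hg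
    have hg0 : ∀ y, 0 ≤ g y := fun y => r1 (2 + t) (by linarith) y
    rw [abs_of_nonneg (Finset.sum_nonneg fun y _ => hg0 y)]
    have hin : (∑ y ∈ J, g y) * (w ^ 2 / 7) ≤ 2 * ε := by
      rw [Finset.sum_mul]
      refine le_trans (le_trans ?_ (Finset.sum_le_sum_of_subset_of_nonneg
        (Finset.filter_subset (fun y => |y - 3| ≤ w) S) ?_)) (hV.trans (by linarith))
      · refine Finset.sum_le_sum fun y hy => ?_
        rw [hJ, Finset.mem_filter] at hy
        have hy0 := hS y hy.1
        refine mul_le_mul_of_nonneg_left ?_ (hg0 y)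
        rw [div_le_div_iff₀ (by norm_num) (by linarith)]
        have hd := abs_le.1 hy.2
        have h2w : 2 * w ≤ |t| := by
          have : (2 * w) ^ 2 ≤ t ^ 2 := by nlinarith [sq_nonneg w]
          have := sq_le_sq.1 this
          rwa [abs_of_pos (by linarith : (0 : ℝ) < 2 * w)] at this
        have hdist : w ^ 2 ≤ (y - (1 + (2 + t))) ^ 2 := by
          rcases le_abs.1 h2w with h | h
          · nlinarith [hd.1, hd.2]
          · nlinarith [hd.1, hd.2]
        have hy7 : y + (2 + t) ≤ 7 := by linarith [hd.2, htm.2]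
        nlinarith [sq_nonneg w]
      · intro y hy _
        have hy0 := hS y hy
        exact mul_nonneg (hg0 y) (div_nonneg (sq_nonneg _) (by linarith))
    rw [hwε] at hin
    by_contra! hcon
    nlinarith
  have hN0 : 0 ≤ N := Finset.sum_nonneg fun x _ => Finset.sum_nonneg fun y _ => abs_nonneg _
  set n := ⌊1 / (6 * w)⌋₊ with hn
  have hn1 : (n : ℝ) ≤ 1 / (6 * w) := Nat.floor_le (by positivity)
  have hn2 : 1 / (6 * w) < n + 1 := Nat.lt_floor_add_one _
  have hθ : |6 * w| = 6 * w := abs_of_pos (by linarith)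
  have hext := abs_kernelSum_two_le hS f (θ := 6 * w) (η := 14 / 3600) (by rw [hθ]; exact hw6)
    (by norm_num) hfN hsmall n
  have he3 : Real.exp (n * |6 * w|) ≤ 3 := by
    have : (n : ℝ) * |6 * w| ≤ 1 := by
      rw [hθ]; rwa [le_div_iff₀ (by linarith)] at hn1
    exact (Real.exp_le_exp.2 this).trans (by linarith [Real.exp_one_lt_d9])
  have hfin : (3 : ℝ) / 100 ≤ (14 / 3600 + N * (1 / 4) ^ n) * 3 := by
    refine le_trans ?_ (hext.trans (mul_le_mul_of_nonneg_left he3 (by positivity)))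
    exact le_trans (by linarith) (le_abs_self _)
  have h4 : Real.exp (1 / (6 * w)) ≤ 3 * 4 ^ n := by
    calc Real.exp (1 / (6 * w)) ≤ Real.exp (1 + n * 1) := Real.exp_le_exp.2 (by linarith)
      _ = Real.exp 1 * Real.exp 1 ^ n := by rw [Real.exp_add, Real.exp_nat_mul]
      _ ≤ 3 * 4 ^ n := by
        have := Real.exp_one_lt_d9
        have h0 := Real.exp_pos 1
        gcongr <;> linarith
  have hq : (1 : ℝ) / 200 ≤ N * (1 / 4) ^ n := by linarith
  rw [one_div_pow, mul_one_div, le_div_iff₀ (by positivity)] at hq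
  linarith

/-! ### From finitely supported functions to finite sums -/

lemma sum_pt_mul {S : Finset ℝ} {a b : ℝ} (ha : a ∈ S) (hb : b ∈ S) (F : ℝ → ℝ → ℝ) :
    ∑ x ∈ S, ∑ y ∈ S, pt a b (x, y) * F x y = F a b := by
  rw [Finset.sum_eq_single_of_mem a ha, Finset.sum_eq_single_of_mem b hb]
  · simp [pt]
  · intro y _ hy
    simp [pt, hy]
  · intro x _ hx
    exact Finset.sum_eq_zero fun y _ => by simp [pt, hx]

/-- A finite grid of nonnegative coordinates containing the support of a two-dimensional move. -/
lemma exists_grid {q : ℝ × ℝ → ℝ} (hq : IsMove2 q) :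
    ∃ S : Finset ℝ, (∀ x ∈ S, 0 ≤ x) ∧ ∀ x y, q (x, y) ≠ 0 → x ∈ S ∧ y ∈ S := by
  refine ⟨hq.1.toFinset.image Prod.fst ∪ hq.1.toFinset.image Prod.snd, ?_, ?_⟩
  · intro x hx
    simp only [Finset.mem_union, Finset.mem_image, Set.Finite.mem_toFinset,
      Function.mem_support] at hx
    by_contra hneg
    rw [not_le] at hneg
    rcases hx with ⟨p, hp, rfl⟩ | ⟨p, hp, rfl⟩
    · exact hp (hq.2 p (Or.inl hneg))
    · exact hp (hq.2 p (Or.inr hneg))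
  · intro x y hxy
    simp only [Finset.mem_union, Finset.mem_image, Set.Finite.mem_toFinset,
      Function.mem_support]
    exact ⟨Or.inl ⟨(x, y), hxy, rfl⟩, Or.inr ⟨(x, y), hxy, rfl⟩⟩

/-- Validity of a one-dimensional move, with the sums taken over a finite set containing
its support. -/
lemma IsValid1.finset_sums {f : ℝ → ℝ} (hf : IsValid1 f) {S : Finset ℝ}
    (hS : ∀ x, f x ≠ 0 → x ∈ S) :
    ∑ x ∈ S, f x = 0 ∧ (∀ lam, 0 < lam → 0 ≤ ∑ x ∈ S, f x * (x / (x + lam))) ∧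
      0 ≤ ∑ x ∈ S, f x * x := by
  have conv : ∀ u : ℝ → ℝ, ∑ᶠ x, u x * f x = ∑ x ∈ S, f x * u x := by
    intro u
    rw [finsum_eq_sum_of_support_subset (s := S)]
    · exact Finset.sum_congr rfl fun x _ => mul_comm _ _
    · intro x hx
      exact hS x (right_ne_zero_of_mul hx)
  obtain ⟨h0, h1, h2⟩ := hf
  refine ⟨?_, fun lam hl => ?_, ?_⟩
  · rwa [finsum_eq_sum_of_support_subset (s := S) f fun x hx => hS x hx] at h0
  · have := h1 lam hl
    rwa [conv fun x => x / (x + lam)] at this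
  · rwa [conv fun x => x] at h2

/-- There are universal constants `C, c > 0` such that: for any `ε ∈ (0,1/2)`
and any valid time-independent point game `(m₁, m₂)` with
`m₁ + m₂ = ⟦1/2+ε, 1/2+ε⟧ - (1/2)⟦1,0⟧ - (1/2)⟦0,1⟧`, one has
`‖m₁‖₁ + ‖m₂‖₁ ≥ C · exp(c · ε^{-1/2})`. -/
theorem stmt_19 :
    ∃ C c : ℝ, 0 < C ∧ 0 < c ∧
      ∀ ε : ℝ, ε ∈ Set.Ioo (0 : ℝ) (1 / 2) →
      ∀ m₁ m₂ : ℝ × ℝ → ℝ, IsMove2 m₁ → IsMove2 m₂ →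
        HorizValid m₁ → VertValid m₂ →
        (∀ p, m₁ p + m₂ p =
          pt (1 / 2 + ε) (1 / 2 + ε) p - (1 / 2) * pt 1 0 p - (1 / 2) * pt 0 1 p) →
      C * Real.exp (c * ε ^ (-(1 / 2) : ℝ)) ≤ (∑ᶠ p, |m₁ p|) + ∑ᶠ p, |m₂ p| := by
  refine ⟨1 / 600, 1 / 360, by norm_num, by norm_num, ?_⟩
  intro ε hε m₁ m₂ hm₁ hm₂ hH hV hsum
  obtain ⟨hε0, -⟩ := hε
  obtain ⟨S₁, hS₁, hs₁⟩ := exists_grid hm₁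
  obtain ⟨S₂, hS₂, hs₂⟩ := exists_grid hm₂
  set S : Finset ℝ := S₁ ∪ S₂ ∪ {0, 1, 1 / 2 + ε} with hSdef
  have hS : ∀ x ∈ S, 0 ≤ x := by
    intro x hx
    simp only [hSdef, Finset.mem_union, Finset.mem_insert, Finset.mem_singleton] at hx
    rcases hx with (hx | hx) | rfl | rfl | rfl
    · exact hS₁ x hx
    · exact hS₂ x hx
    · exact le_rfl
    · exact zero_le_one
    · positivity
  have h0S : (0 : ℝ) ∈ S := by simp [hSdef]
  have h1S : (1 : ℝ) ∈ S := by simp [hSdef]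
  have hsS : 1 / 2 + ε ∈ S := by simp [hSdef]
  have hq₁ : ∀ x y, m₁ (x, y) ≠ 0 → x ∈ S ∧ y ∈ S := fun x y h => by
    have := hs₁ x y h
    simp [hSdef, this.1, this.2]
  have hq₂ : ∀ x y, m₂ (x, y) ≠ 0 → x ∈ S ∧ y ∈ S := fun x y h => by
    have := hs₂ x y h
    simp [hSdef, this.1, this.2]
  have rows := fun y => (hH y).finset_sums (S := S) fun x hx => (hq₁ x y hx).1
  have cols := fun x => (hV x).finset_sums (S := S) fun y hy => (hq₂ x y hy).2
  have norm_eq : ∀ q : ℝ × ℝ → ℝ, (∀ x y, q (x, y) ≠ 0 → x ∈ S ∧ y ∈ S) →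
      ∑ᶠ p, |q p| = ∑ x ∈ S, ∑ y ∈ S, |q (x, y)| := by
    intro q hq
    rw [finsum_eq_sum_of_support_subset (s := S ×ˢ S), Finset.sum_product]
    intro p hp
    have := hq p.1 p.2 (by simpa using hp)
    simpa using this
  have hpow : ε ^ (-(1 / 2) : ℝ) = 1 / √ε := by
    rw [Real.rpow_neg hε0.le, ← Real.sqrt_eq_rpow, one_div]
  have hsq : 0 < √ε := Real.sqrt_pos.2 hε0
  have hexp : 1 / 360 * ε ^ (-(1 / 2) : ℝ) = 1 / (6 * (60 * √ε)) := by
    rw [hpow]; field_simp; norm_num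
  rw [hexp, norm_eq m₁ hq₁, norm_eq m₂ hq₂]
  have hn₂ : 0 ≤ ∑ x ∈ S, ∑ y ∈ S, |m₂ (x, y)| :=
    Finset.sum_nonneg fun x _ => Finset.sum_nonneg fun y _ => abs_nonneg _
  by_cases hw6 : 6 * (60 * √ε) ≤ 1
  · have := weight_lower_bound (m₁ := fun x y => m₁ (x, y)) (m₂ := fun x y => m₂ (x, y))
      hS hε0 (w := 60 * √ε) (by positivity)
      (by rw [mul_pow, Real.sq_sqrt hε0.le]; norm_num) hw6
      (fun y => (rows y).1) (fun lam hl y => (rows y).2.1 lam hl) (fun y => (rows y).2.2)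
      (fun x => (cols x).1) (fun lam hl x => (cols x).2.1 lam hl) (fun x => (cols x).2.2)
      (by
        intro φ ψ
        simp only [hsum, sub_mul, mul_assoc, Finset.sum_sub_distrib, ← Finset.mul_sum]
        rw [sum_pt_mul hsS hsS fun x y => φ x * ψ y, sum_pt_mul h1S h0S fun x y => φ x * ψ y,
          sum_pt_mul h0S h1S fun x y => φ x * ψ y])
    linarith
  -- for large `ε` the exponential is bounded, and the final point alone has weight one
  · rw [not_le] at hw6
    have he : Real.exp (1 / (6 * (60 * √ε))) ≤ 3 := by
      refine (Real.exp_le_exp.2 ?_).trans (Real.exp_one_lt_d9.le.trans (by norm_num))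
      rw [div_le_one (by positivity)]
      exact hw6.le
    have single : ∀ q : ℝ × ℝ → ℝ, |q (1 / 2 + ε, 1 / 2 + ε)| ≤
        ∑ x ∈ S, ∑ y ∈ S, |q (x, y)| := fun q =>
      (Finset.single_le_sum (f := fun y => |q (1 / 2 + ε, y)|)
        (fun y _ => abs_nonneg _) hsS).trans
      (Finset.single_le_sum (f := fun x => ∑ y ∈ S, |q (x, y)|)
        (fun x _ => Finset.sum_nonneg fun y _ => abs_nonneg _) hsS)
    have hpt := hsum (1 / 2 + ε, 1 / 2 + ε)
    have hne : 1 / 2 + ε ≠ 0 := by positivity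
    simp only [pt, Prod.mk.injEq, hne, and_false, false_and, if_true, if_false,
      mul_zero, sub_zero] at hpt
    linarith [single m₁, single m₂, le_abs_self (m₁ (1 / 2 + ε, 1 / 2 + ε)),
      le_abs_self (m₂ (1 / 2 + ε, 1 / 2 + ε))]
end
end
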